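/- arXiv:2107.03259 — 2 statements merged into one kernel-verified Lean document; each statement's English description precedes it below -/
import Mathlib

section
/- Let d ≥ 3. There exists C < ∞ such that for any r ≥ 1, any ℓ ≥ 16·r², and any K ⊆ B(3r) (the sup-norm ball of radius 3r around the origin), one has Σ_{z ∈ Z^d : |z| ≥ 4r} P_z(T_K ≤ ℓ) ≤ C·ℓ·cap(K). -/
open MeasureTheory ENNReal Filter

noncomputable section

abbrev Zd (d : ℕ) := Fin d → ℤ

def supNorm {d : ℕ} (x : Zd d) : ℕ := Finset.univ.sup fun i => (x i).natAbs

def IsNbr {d : ℕ} (x y : Zd d) : Prop := (∑ i, |x i - y i|) = 1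

def stepVec {d : ℕ} (p : Fin d × Bool) : Zd d :=
  fun j => if j = p.1 then (if p.2 then 1 else -1) else 0

def nbrs {d : ℕ} (y : Zd d) : Finset (Zd d) :=
  Finset.univ.image fun p : Fin d × Bool => y + stepVec p

/-- A family of measures which is a simple random walk on `ℤ^d` started at `x`. -/
structure SRW (d : ℕ) where
  P : Zd d → Measure (ℕ → Zd d)
  isProb : ∀ x, IsProbabilityMeasure (P x)
  start : ∀ x, P x {ω | ω 0 = x} = 1
  nn : ∀ x, P x {ω | ∀ t, IsNbr (ω t) (ω (t+1))} = 1
  cyl : ∀ (x : Zd d) (n : ℕ) (γ : ℕ → Zd d), γ 0 = x →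
      (∀ t < n, IsNbr (γ t) (γ (t+1))) →
      P x {ω | ∀ t ≤ n, ω t = γ t} = (((2 * d : ℕ) : ℝ≥0∞))⁻¹ ^ n

def HitBy {d : ℕ} (K : Set (Zd d)) (ℓ : ℕ) : Set (ℕ → Zd d) := {ω | ∃ t ≤ ℓ, ω t ∈ K}

def Hits {d : ℕ} (K : Set (Zd d)) : Set (ℕ → Zd d) := {ω | ∃ t, ω t ∈ K}

def nPaths (d : ℕ) : ℕ → Zd d → Zd d → ℕ
  | 0, x, y => if x = y then 1 else 0
  | t+1, x, y => ∑ z ∈ nbrs y, nPaths d t x z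

def pKer (d t : ℕ) (x y : Zd d) : ℝ≥0∞ := (nPaths d t x y : ℝ≥0∞) / ((2*d : ℕ) : ℝ≥0∞)^t

def green (d : ℕ) (x y : Zd d) : ℝ≥0∞ := ∑' t, pKer d t x y

def nAvoid {d : ℕ} (K : Finset (Zd d)) : ℕ → Zd d → ℕ
  | 0, _ => 1
  | t+1, x => ∑ z ∈ (nbrs x).filter (fun z => z ∉ K), nAvoid K t z

def escProb {d : ℕ} (K : Finset (Zd d)) (x : Zd d) : ℝ≥0∞ :=
  ⨅ n, (nAvoid K n x : ℝ≥0∞) / ((2*d : ℕ) : ℝ≥0∞)^n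

def cap {d : ℕ} (K : Finset (Zd d)) : ℝ≥0∞ := ∑ x ∈ K, escProb K x

def ConnIn {d : ℕ} (S : Set (Zd d)) (x y : Zd d) : Prop :=
  ∃ (n : ℕ) (γ : ℕ → Zd d), γ 0 = x ∧ γ n = y ∧ (∀ t < n, IsNbr (γ t) (γ (t+1))) ∧ ∀ t ≤ n, γ t ∈ S

def PercSet {d : ℕ} (S : Set (Zd d)) : Prop := ∃ x ∈ S, {y | ConnIn S x y}.Infinite

def IsAnimal {d : ℕ} (H : Finset (Zd d)) : Prop :=
  (0 : Zd d) ∈ H ∧ ∀ x ∈ H, ∀ y ∈ H, ConnIn (H : Set (Zd d)) x y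

abbrev Animal (d : ℕ) := {H : Finset (Zd d) // IsAnimal H}

def zooTrace {d : ℕ} {Ω : Type*} (N : Zd d × Animal d → Ω → ℕ) (ω : Ω) : Set (Zd d) :=
  {z | ∃ p : Zd d × Animal d, 1 ≤ N p ω ∧ z - p.1 ∈ p.2.1}

def poissonProb (lam : ℝ) (k : ℕ) : ℝ≥0∞ :=
  ENNReal.ofReal (Real.exp (-lam) * lam ^ k / (Nat.factorial k))

def cluster {d : ℕ} (S : Set (Zd d)) (x : Zd d) : Set (Zd d) := {y | x ∈ S ∧ ConnIn S x y}

def closF {d : ℕ} (H : Finset (Zd d)) : Finset (Zd d) := H ∪ H.biUnion nbrs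


abbrev Worm (d : ℕ) := Σ n : ℕ, (Zd d × (Fin n → Fin d × Bool))

def wormLen {d : ℕ} (w : Worm d) : ℕ := w.1 + 1

def IsBernoulliSite {d : ℕ} (P : Measure (Zd d → Bool)) (p : ℝ≥0∞) : Prop :=
  ∀ A B : Finset (Zd d), Disjoint A B →
    P {η | (∀ a ∈ A, η a = true) ∧ ∀ b ∈ B, η b = false} = p ^ A.card * (1 - p) ^ B.card

/-- The critical probability of Bernoulli site percolation on `ℤ^d`. -/
def pcSite (d : ℕ) : ℝ≥0∞ :=
  sInf {p | ∀ P : Measure (Zd d → Bool), IsProbabilityMeasure P → IsBernoulliSite P p →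
    P {η | PercSet {x | η x = true}} = 1}

open Classical in
/-- The Grimmett–Marstrand exploration process: given an ordering `emb` of the (directed)
nearest-neighbour edges and outcomes `b t`, produce the pair (good set, bad set) at step `t`. -/
def explore {d : ℕ} (emb : (Zd d × Zd d) ↪ ℕ) (b : ℕ → Bool) : ℕ → Finset (Zd d) × Finset (Zd d)
  | 0 => if b 0 then ({0}, ∅) else (∅, {0})
  | t+1 =>
    let G := (explore emb b t).1
    let B := (explore emb b t).2
    let cand : Finset (Zd d × Zd d) :=
      G.biUnion fun u => ((nbrs u).filter fun w => w ∉ G ∧ w ∉ B).image fun w => (u, w)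
    if h : cand.Nonempty then
      let e := (Finset.exists_min_image cand (fun p => emb p) h).choose
      if b (t+1) then (insert e.2 G, B) else (G, insert e.2 B)
    else (G, B)

/-- Mutual Dirichlet energy of two measures on `ℤ^d` w.r.t. the random-walk Green function. -/
def energy (d : ℕ) (μ₁ μ₂ : Zd d → ℝ≥0∞) : ℝ≥0∞ :=
  ∑' x, ∑' y, green d x y * μ₁ x * μ₂ y

/-!
Reversing time, `∑_z φ(z) P_z(T_K = m)` is the sum over `x ∈ K` of the expectation of `φ(X_m)` for
the walk from `x` on the event that it stays off `K` at times `1, …, m`. When `φ` is an indicator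
and the walk from each point of its support has probability at least `c` of never entering `K`,
continuing the reversed walk shows that `c` times this sum is at most `cap K`; summing over the `ℓ`
possible values of `m` gives the theorem with `C = 1 / c`. In dimension at least three a uniform `c`
comes from a bounded superharmonic function that is at least `1` on `K` and at most `1 - c` at a
given `z` with `|z| ≥ 4r`: a negative power of the Euclidean distance to a point placed far behind
the box, so that the box and `z` are separated by a sphere about that point.
-/

lemma rpow_neg_quarter_one_add_le {t : ℝ} (ht : |t| ≤ 1 / 16) :
    (1 + t) ^ (-(1 / 4) : ℝ) ≤ 1 - t / 4 + 3 * t ^ 2 / 16 := by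
  obtain ⟨h_lower, h_upper⟩ := abs_le.mp ht
  have h_pos : 0 < 1 - t / 4 + 3 * t ^ 2 / 16 := by nlinarith [sq_nonneg t]
  have h_pow : 1 ≤ (1 + t) * (1 - t / 4 + 3 * t ^ 2 / 16) ^ 4 := by
    set u := t / 4 - 3 * t ^ 2 / 16 with hu
    have h_truncate : 1 - 4 * u + 6 * u ^ 2 - 4 * u ^ 3 ≤ (1 - u) ^ 4 := by
      nlinarith [sq_nonneg (u ^ 2)]
    have h_expand : (1 + t) * (1 - 4 * u + 6 * u ^ 2 - 4 * u ^ 3) = 1 + t ^ 2 * (1 / 8 + t / 2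
        - t ^ 2 * (35 / 128 - 63 / 256 * t + 81 / 1024 * t ^ 2 - 27 / 1024 * t ^ 3)) := by
      rw [hu]
      ring
    have h_sq : t ^ 2 ≤ 1 / 256 := by nlinarith
    have h_remainder : 35 / 128 - 63 / 256 * t + 81 / 1024 * t ^ 2 - 27 / 1024 * t ^ 3 ≤ 1 := by
      nlinarith
    calc 1 ≤ (1 + t) * (1 - 4 * u + 6 * u ^ 2 - 4 * u ^ 3) := by
          rw [h_expand, le_add_iff_nonneg_right]
          exact mul_nonneg (sq_nonneg t) (by nlinarith [sq_nonneg t])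
      _ ≤ (1 + t) * (1 - u) ^ 4 := mul_le_mul_of_nonneg_left h_truncate (by linarith)
      _ = (1 + t) * (1 - t / 4 + 3 * t ^ 2 / 16) ^ 4 := by rw [hu]; ring
  rw [show (-(1 / 4) : ℝ) = (-4)⁻¹ by norm_num,
    Real.rpow_inv_le_iff_of_neg (by linarith) h_pos (by norm_num), Real.rpow_neg h_pos.le]
  exact (inv_le_iff_one_le_mul₀ (by positivity)).mpr (mod_cast h_pow)

lemma one_add_mul_le_rpow_neg_one_sub {p s : ℝ} (hp : 0 ≤ p) (hs : s < 1) :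
    1 + p * s ≤ (1 - s) ^ (-p) :=
  calc 1 + p * s ≤ Real.exp (p * s) := by linarith [Real.add_one_le_exp (p * s)]
    _ = Real.exp (-s) ^ (-p) := by rw [← Real.exp_mul]; ring_nf
    _ ≤ (1 - s) ^ (-p) := Real.rpow_le_rpow_of_nonpos (by linarith)
        (by linarith [Real.add_one_le_exp (-s)]) (by linarith)

lemma rpow_neg_quarter_add_add_sub_le {v y : ℝ} (hv : 0 < v) (hy : 32 * |y| ≤ v) :
    (v + 2 * y) ^ (-(1 / 4) : ℝ) + (v - 2 * y) ^ (-(1 / 4) : ℝ)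
      ≤ v ^ (-(1 / 4) : ℝ) * (2 + 3 / 2 * (y ^ 2 / v ^ 2)) := by
  set t := 2 * y / v with ht
  have ht_abs : |t| ≤ 1 / 16 := by
    rw [ht, abs_div, abs_mul, abs_of_pos hv, abs_two, div_le_iff₀ hv]
    linarith
  obtain ⟨h_lower, h_upper⟩ := abs_le.mp ht_abs
  have h_plus := rpow_neg_quarter_one_add_le ht_abs
  have h_minus := rpow_neg_quarter_one_add_le (t := -t) (by rwa [abs_neg])
  calc (v + 2 * y) ^ (-(1 / 4) : ℝ) + (v - 2 * y) ^ (-(1 / 4) : ℝ)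
      = (v * (1 + t)) ^ (-(1 / 4) : ℝ) + (v * (1 + -t)) ^ (-(1 / 4) : ℝ) := by
        congr 2 <;> rw [ht] <;> field_simp
        ring
    _ = v ^ (-(1 / 4) : ℝ) * ((1 + t) ^ (-(1 / 4) : ℝ) + (1 + -t) ^ (-(1 / 4) : ℝ)) := by
        rw [Real.mul_rpow hv.le (by linarith), Real.mul_rpow hv.le (by linarith), mul_add]
    _ ≤ v ^ (-(1 / 4) : ℝ) * (2 + 3 / 8 * t ^ 2) := by
        exact mul_le_mul_of_nonneg_left (by linarith) (Real.rpow_nonneg hv.le _)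
    _ = v ^ (-(1 / 4) : ℝ) * (2 + 3 / 2 * (y ^ 2 / v ^ 2)) := by
        rw [ht]
        ring

section Lattice

variable {d : ℕ}

lemma stepVec_eq_single (p : Fin d × Bool) :
    stepVec p = Pi.single p.1 (if p.2 then 1 else -1) := by
  ext j
  simp only [stepVec, Pi.single_apply]

lemma stepVec_injective : Function.Injective (stepVec : Fin d × Bool → Zd d) := by
  rintro ⟨i, a⟩ ⟨j, b⟩ h
  have h_at := congrFun h i
  obtain rfl : i = j := by
    by_contra hij
    cases a <;> simp [stepVec, hij] at h_at
  cases a <;> cases b <;> simp [stepVec] at h_at ⊢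

lemma sum_nbrs {M : Type*} [AddCommMonoid M] (x : Zd d) (f : Zd d → M) :
    ∑ w ∈ nbrs x, f w = ∑ p : Fin d × Bool, f (x + stepVec p) :=
  Finset.sum_image fun _ _ _ _ h => stepVec_injective (add_left_cancel h)

lemma card_nbrs (x : Zd d) : (nbrs x).card = 2 * d := by
  rw [Finset.card_eq_sum_ones, sum_nbrs]
  simp [mul_comm]

lemma eq_single_of_sum_abs_eq_one {ι : Type*} [Fintype ι] [DecidableEq ι] {v : ι → ℤ}
    (h : ∑ i, |v i| = 1) : ∃ i, v = Pi.single i 1 ∨ v = Pi.single i (-1) := by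
  obtain ⟨i, hi⟩ : ∃ i, v i ≠ 0 := by
    by_contra! h_zero
    simp [h_zero] at h
  have h_split := Finset.add_sum_erase Finset.univ (fun j => |v j|) (Finset.mem_univ i)
  have h_rest_nonneg : 0 ≤ ∑ j ∈ Finset.univ.erase i, |v j| :=
    Finset.sum_nonneg fun _ _ => abs_nonneg _
  have h_pos : 0 < |v i| := abs_pos.mpr hi
  have h_rest : ∑ j ∈ Finset.univ.erase i, |v j| = 0 := by lia
  have h_off : ∀ j, j ≠ i → v j = 0 := fun j hj => abs_eq_zero.mp <|
    (Finset.sum_eq_zero_iff_of_nonneg fun _ _ => abs_nonneg _).mp h_rest j (by simp [hj])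
  have h_single : v = Pi.single i (v i) := by
    ext j
    by_cases hj : j = i
    · simp [hj]
    · simp [hj, h_off j hj]
  refine ⟨i, ?_⟩
  rcases (abs_eq zero_le_one).mp (show |v i| = 1 by lia) with h_one | h_one
  · exact .inl (h_one ▸ h_single)
  · exact .inr (h_one ▸ h_single)

lemma mem_nbrs_iff_isNbr {x y : Zd d} : y ∈ nbrs x ↔ IsNbr x y := by
  simp only [nbrs, Finset.mem_image, Finset.mem_univ, true_and]
  constructor
  · rintro ⟨p, rfl⟩
    simp [IsNbr, stepVec, apply_ite abs]
  · intro h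
    obtain ⟨i, hi | hi⟩ := eq_single_of_sum_abs_eq_one (v := x - y) h
    · exact ⟨(i, false), by simp [stepVec_eq_single, Pi.single_neg, ← hi]⟩
    · refine ⟨(i, true), ?_⟩
      rw [stepVec_eq_single, if_pos rfl, ← neg_neg (1 : ℤ), Pi.single_neg, ← hi]
      abel

lemma mem_nbrs_comm {x y : Zd d} : y ∈ nbrs x ↔ x ∈ nbrs y := by
  simp only [mem_nbrs_iff_isNbr, IsNbr, abs_sub_comm]

lemma natAbs_le_supNorm (x : Zd d) (i : Fin d) : (x i).natAbs ≤ supNorm x :=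
  Finset.le_sup (f := fun j => (x j).natAbs) (Finset.mem_univ i)

lemma exists_le_natAbs_of_le_supNorm {n : ℕ} {x : Zd d} (hn : 0 < n) (h : n ≤ supNorm x) :
    ∃ i, n ≤ (x i).natAbs := by
  simpa [supNorm, Finset.le_sup_iff hn] using h

/-- The squared Euclidean norm. -/
def sqNorm (x : Zd d) : ℝ := ∑ i, (x i : ℝ) ^ 2

lemma sqNorm_nonneg (x : Zd d) : 0 ≤ sqNorm x := Finset.sum_nonneg fun _ _ => sq_nonneg _

lemma sq_le_sqNorm (x : Zd d) (i : Fin d) : (x i : ℝ) ^ 2 ≤ sqNorm x :=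
  Finset.single_le_sum (f := fun j => (x j : ℝ) ^ 2) (fun _ _ => sq_nonneg _) (Finset.mem_univ i)

lemma sqNorm_le_of_supNorm_le {n : ℕ} {x : Zd d} (h : supNorm x ≤ n) :
    sqNorm x ≤ d * (n : ℝ) ^ 2 := by
  have h_coord : ∀ i, (x i : ℝ) ^ 2 ≤ (n : ℝ) ^ 2 := fun i => by
    rw [sq_le_sq, Nat.abs_cast, ← Int.cast_abs, Int.abs_eq_natAbs]
    exact_mod_cast (natAbs_le_supNorm x i).trans h
  simpa [sqNorm] using Finset.sum_le_card_nsmul Finset.univ _ _ fun i _ => h_coord i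

lemma sqNorm_add_single (x : Zd d) (i : Fin d) (a : ℤ) :
    sqNorm (x + Pi.single i a) = sqNorm x + 2 * a * x i + (a : ℝ) ^ 2 := by
  have h_coord : ∀ j, (((x + Pi.single i a : Zd d) j : ℤ) : ℝ) ^ 2
      = (x j : ℝ) ^ 2 + if j = i then 2 * a * x i + (a : ℝ) ^ 2 else 0 := fun j => by
    by_cases hj : j = i
    · subst hj
      simp
      ring
    · simp [hj]
  simp only [sqNorm, h_coord, Finset.sum_add_distrib, Finset.sum_ite_eq', Finset.mem_univ, if_true]
  ring

end Lattice

section Potential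

variable {d : ℕ}

/-- A strictly positive superharmonic function in dimension at least three, used in place of the
Green function. The exponent lies strictly between `0` and `(d - 2) / 2`, so the continuum version
is strictly superharmonic; the constant `256` absorbs the discretisation error near the origin. -/
def potential (x : Zd d) : ℝ := (sqNorm x + 256) ^ (-(1 / 4) : ℝ)

lemma potential_nonneg (x : Zd d) : 0 ≤ potential x :=
  Real.rpow_nonneg (by linarith [sqNorm_nonneg x]) _

lemma sum_bool_potential_add_stepVec_le (x : Zd d) (i : Fin d) :
    ∑ b : Bool, potential (x + stepVec (i, b)) ≤ (sqNorm x + 257) ^ (-(1 / 4) : ℝ) *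
      (2 + 3 / 2 * ((x i : ℝ) ^ 2 / (sqNorm x + 257) ^ 2)) := by
  have h_coord : 32 * |(x i : ℝ)| ≤ sqNorm x + 257 := by
    nlinarith [sq_le_sqNorm x i, sq_nonneg (|(x i : ℝ)| - 16), sq_abs (x i : ℝ)]
  refine le_of_eq_of_le ?_
    (rpow_neg_quarter_add_add_sub_le (by linarith [sqNorm_nonneg x]) h_coord)
  simp only [Fintype.sum_bool, potential, stepVec_eq_single, sqNorm_add_single]
  congr 2 <;> push_cast <;> simp <;> ring

lemma sum_potential_add_stepVec_le (hd : 3 ≤ d) (x : Zd d) :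
    ∑ p : Fin d × Bool, potential (x + stepVec p) ≤ 2 * d * potential x := by
  have hd_real : (3 : ℝ) ≤ d := mod_cast hd
  have h_nonneg := sqNorm_nonneg x
  set v : ℝ := sqNorm x + 257 with hv
  have hv_pos : 0 < v := by linarith
  have hv_inv : 1 / v < 1 := by rw [div_lt_one hv_pos]; linarith
  have h_ratio : sqNorm x / v ^ 2 ≤ 1 / v := by
    rw [div_le_div_iff₀ (by positivity) hv_pos]
    nlinarith
  calc ∑ p : Fin d × Bool, potential (x + stepVec p)
      ≤ ∑ i, v ^ (-(1 / 4) : ℝ) * (2 + 3 / 2 * ((x i : ℝ) ^ 2 / v ^ 2)) := by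
        rw [Fintype.sum_prod_type]
        exact Finset.sum_le_sum fun i _ => sum_bool_potential_add_stepVec_le x i
    _ = v ^ (-(1 / 4) : ℝ) * (2 * d + 3 / 2 * (sqNorm x / v ^ 2)) := by
        rw [← Finset.mul_sum, Finset.sum_add_distrib, ← Finset.mul_sum, ← Finset.sum_div, ← sqNorm]
        simp [mul_comm]
    _ ≤ v ^ (-(1 / 4) : ℝ) * (2 * d * (1 + 1 / 4 * (1 / v))) := by
        gcongr
        nlinarith [one_div_pos.mpr hv_pos]
    _ ≤ v ^ (-(1 / 4) : ℝ) * (2 * d * (1 - 1 / v) ^ (-(1 / 4) : ℝ)) := by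
        gcongr
        exact one_add_mul_le_rpow_neg_one_sub (by norm_num) hv_inv
    _ = 2 * d * potential x := by
        have h_factor : sqNorm x + 256 = v * (1 - 1 / v) := by
          rw [hv]
          field_simp
          ring
        rw [potential, h_factor, Real.mul_rpow hv_pos.le (by linarith)]
        ring

end Potential

section Operators

variable {d : ℕ}

/-- The transition operator of simple random walk, `transition φ x = E_x[φ(X₁)]`. -/
def transition (φ : Zd d → ℝ≥0∞) (x : Zd d) : ℝ≥0∞ :=
  ((2 * d : ℕ) : ℝ≥0∞)⁻¹ * ∑ w ∈ nbrs x, φ w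

lemma transition_mono : Monotone (transition (d := d)) := fun _ _ h _ =>
  mul_le_mul_right (Finset.sum_le_sum fun w _ => h w) _

lemma transition_add (φ ψ : Zd d → ℝ≥0∞) :
    transition (φ + ψ) = transition φ + transition ψ := by
  ext x
  simp only [transition, Pi.add_apply, Finset.sum_add_distrib, mul_add]

lemma transition_one_le : transition (1 : Zd d → ℝ≥0∞) ≤ 1 := fun x => by
  simp [transition, card_nbrs, ENNReal.inv_mul_le_one]

lemma transition_one (hd : d ≠ 0) : transition (1 : Zd d → ℝ≥0∞) = 1 := by
  ext x
  simpa [transition, card_nbrs] using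
    ENNReal.inv_mul_cancel (by simp [hd]) (ENNReal.natCast_ne_top (2 * d))

lemma transition_ofReal_le (hd : d ≠ 0) {f : Zd d → ℝ} (hf : ∀ x, 0 ≤ f x) {x : Zd d}
    (h : ∑ p : Fin d × Bool, f (x + stepVec p) ≤ 2 * d * f x) :
    transition (fun y => ENNReal.ofReal (f y)) x ≤ ENNReal.ofReal (f x) := by
  rw [transition, ENNReal.inv_mul_le_iff (by simp [hd]) (ENNReal.natCast_ne_top _), sum_nbrs,
    ← ENNReal.ofReal_sum_of_nonneg fun p _ => hf _, ← ENNReal.ofReal_natCast,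
    ← ENNReal.ofReal_mul (Nat.cast_nonneg _)]
  exact ENNReal.ofReal_le_ofReal (mod_cast h)

lemma tsum_mul_transition (φ ψ : Zd d → ℝ≥0∞) :
    ∑' x, φ x * transition ψ x = ∑' x, transition φ x * ψ x := by
  have h_nbrs : ∀ (x : Zd d) (f : Zd d → ℝ≥0∞),
      ∑ w ∈ nbrs x, f w = ∑' w, if w ∈ nbrs x then f w else 0 := fun x f => by
    rw [tsum_eq_sum (s := nbrs x) fun w hw => if_neg hw]
    exact Finset.sum_congr rfl fun w hw => (if_pos hw).symm
  simp only [transition, h_nbrs, ← ENNReal.tsum_mul_left, ← ENNReal.tsum_mul_right]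
  rw [ENNReal.tsum_comm]
  refine tsum_congr fun x => tsum_congr fun w => ?_
  simp only [mem_nbrs_comm (x := w)]
  split_ifs <;> ring

/-- The transition operator killed upon stepping into `K`:
`avoidStep K φ x = E_x[φ(X₁); X₁ ∉ K]`. -/
def avoidStep (K : Set (Zd d)) (φ : Zd d → ℝ≥0∞) : Zd d → ℝ≥0∞ :=
  transition (Kᶜ.indicator φ)

lemma avoidStep_mono (K : Set (Zd d)) : Monotone (avoidStep K) := fun _ _ h =>
  transition_mono fun x => Set.indicator_le_indicator (h x)

lemma avoidStep_one_le (K : Set (Zd d)) : avoidStep K 1 ≤ 1 :=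
  (transition_mono (Set.indicator_le_self _ _)).trans transition_one_le

/-- `firstHitProb K m z = P_z(T_K = m)`, computed by conditioning on the first step. -/
def firstHitProb (K : Set (Zd d)) : ℕ → Zd d → ℝ≥0∞
  | 0 => K.indicator 1
  | m + 1 => Kᶜ.indicator (transition (firstHitProb K m))

/-- Reversing the path turns first entrance into `K` at time `m`, from a starting point weighted by
`φ`, into a walk started in `K` that avoids `K` during the `m` steps after time zero. -/
lemma tsum_mul_firstHitProb (K : Set (Zd d)) (m : ℕ) (φ : Zd d → ℝ≥0∞) :
    ∑' z, φ z * firstHitProb K m z = ∑' x, (avoidStep K)^[m] φ x * K.indicator 1 x := by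
  induction m generalizing φ with
  | zero => rfl
  | succ m ih =>
    calc ∑' z, φ z * Kᶜ.indicator (transition (firstHitProb K m)) z
        = ∑' z, Kᶜ.indicator φ z * transition (firstHitProb K m) z :=
          tsum_congr fun z => by by_cases hz : z ∈ K <;> simp [hz]
      _ = ∑' z, avoidStep K φ z * firstHitProb K m z := tsum_mul_transition _ _
      _ = ∑' x, (avoidStep K)^[m + 1] φ x * K.indicator 1 x := ih (avoidStep K φ)

end Operators

section Escape

variable {d : ℕ} (K : Finset (Zd d))

lemma nAvoid_div_eq_iterate_avoidStep (n : ℕ) (x : Zd d) :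
    (nAvoid K n x : ℝ≥0∞) / ((2 * d : ℕ) : ℝ≥0∞) ^ n = (avoidStep (K : Set (Zd d)))^[n] 1 x := by
  induction n generalizing x with
  | zero => simp [nAvoid]
  | succ n ih =>
    rw [Function.iterate_succ_apply', avoidStep, transition, ← funext ih]
    simp only [nAvoid, Nat.cast_sum, Finset.sum_filter, div_eq_mul_inv, ENNReal.inv_pow,
      Finset.mul_sum, Finset.sum_mul]
    refine Finset.sum_congr rfl fun w _ => ?_
    by_cases hw : w ∈ K <;> simp [hw, pow_succ', mul_left_comm]

lemma escProb_eq_iInf_iterate_avoidStep (x : Zd d) :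
    escProb K x = ⨅ n, (avoidStep (K : Set (Zd d)))^[n] 1 x := by
  simp only [escProb, nAvoid_div_eq_iterate_avoidStep]

variable {K}

lemma le_escProb_of_le_avoidStep {φ : Zd d → ℝ≥0∞} (h_one : φ ≤ 1)
    (h_step : φ ≤ avoidStep (K : Set (Zd d)) φ) : φ ≤ escProb K := fun x => by
  rw [escProb_eq_iInf_iterate_avoidStep]
  refine le_iInf fun n => ?_
  calc φ x ≤ (avoidStep (K : Set (Zd d)))^[n] φ x :=
        (avoidStep_mono _).monotone_iterate_of_le_map h_step (Nat.zero_le n) x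
    _ ≤ (avoidStep (K : Set (Zd d)))^[n] 1 x := (avoidStep_mono _).iterate n h_one x

lemma one_sub_le_escProb (hd : d ≠ 0) {u : Zd d → ℝ≥0∞} (hu : transition u ≤ u)
    (hK : ∀ x ∈ K, 1 ≤ u x) : 1 - u ≤ escProb K := by
  refine le_escProb_of_le_avoidStep tsub_le_self ?_
  have h_indicator : (K : Set (Zd d))ᶜ.indicator (1 - u) = 1 - u :=
    Set.indicator_eq_self.mpr fun x hx hxK => hx (tsub_eq_zero_of_le (hK x hxK))
  have h_one_le : 1 ≤ transition u + transition (1 - u) := by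
    calc 1 = transition 1 := (transition_one hd).symm
      _ ≤ transition (u + (1 - u)) := transition_mono le_add_tsub
      _ = transition u + transition (1 - u) := transition_add _ _
  calc 1 - u ≤ 1 - transition u := tsub_le_tsub_left hu 1
    _ ≤ transition (1 - u) := tsub_le_iff_left.mpr h_one_le
    _ = avoidStep K (1 - u) := by rw [avoidStep, h_indicator]

lemma iterate_avoidStep_le_escProb {φ : Zd d → ℝ≥0∞} (h : φ ≤ escProb K) (t : ℕ) :
    (avoidStep (K : Set (Zd d)))^[t] φ ≤ escProb K := fun x => by
  rw [escProb_eq_iInf_iterate_avoidStep]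
  refine le_iInf fun n => ?_
  have h_le : φ ≤ (avoidStep (K : Set (Zd d)))^[n] 1 := fun y =>
    (h y).trans ((escProb_eq_iInf_iterate_avoidStep K y).trans_le (iInf_le _ n))
  calc (avoidStep (K : Set (Zd d)))^[t] φ x
      ≤ (avoidStep (K : Set (Zd d)))^[t] ((avoidStep K)^[n] 1) x :=
        (avoidStep_mono _).iterate t h_le x
    _ = (avoidStep (K : Set (Zd d)))^[t + n] 1 x := by rw [Function.iterate_add_apply]
    _ ≤ (avoidStep (K : Set (Zd d)))^[n] 1 x :=
        (avoidStep_mono _).antitone_iterate_of_map_le (avoidStep_one_le _) (Nat.le_add_left n t) x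

/-- A large Euclidean sphere is almost flat at the scale `r`, so one centred at `-q`, far away on
the side opposite to `z`, passes between the box and `z`. -/
lemma exists_sqNorm_add_separated {r : ℕ} (hr : 1 ≤ r) {z : Zd d} (hz : 4 * r ≤ supNorm z) :
    ∃ (q : Zd d) (ρ : ℝ), 0 < ρ ∧ (∀ x, supNorm x ≤ 3 * r → sqNorm (x + q) + 256 ≤ ρ) ∧
      (1 + 1 / (400 * d)) * ρ ≤ sqNorm (z + q) + 256 := by
  obtain ⟨i, hi⟩ := exists_le_natAbs_of_le_supNorm (by lia) hz
  obtain ⟨σ, hσ, hσz⟩ : ∃ σ : ℤ, (σ = 1 ∨ σ = -1) ∧ 4 * (r : ℤ) ≤ σ * z i := by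
    rcases le_total 0 (z i) with h | h
    · exact ⟨1, .inl rfl, by lia⟩
    · exact ⟨-1, .inr rfl, by lia⟩
  have hσ_sq : (σ : ℝ) ^ 2 = 1 := by rcases hσ with rfl | rfl <;> norm_num
  have hd_real : (1 : ℝ) ≤ d := mod_cast i.pos
  have hr_real : (1 : ℝ) ≤ r := mod_cast hr
  have h_norm : ∀ x : Zd d, sqNorm (x + Pi.single i (σ * (5 * d * r)))
      = sqNorm x + 10 * (d * r) * (σ * x i) + 25 * d ^ 2 * r ^ 2 := fun x => by
    rw [sqNorm_add_single]
    push_cast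
    linear_combination (25 * d ^ 2 * r ^ 2 : ℝ) * hσ_sq
  refine ⟨Pi.single i (σ * (5 * d * r)), (25 * d ^ 2 + 39 * d) * r ^ 2 + 256, by positivity,
    fun x hx => ?_, ?_⟩
  · have h_sq := sqNorm_le_of_supNorm_le hx
    have h_coord : (σ : ℝ) * x i ≤ 3 * r := by
      have := natAbs_le_supNorm x i
      have h_int : σ * x i ≤ 3 * r := by rcases hσ with rfl | rfl <;> lia
      exact_mod_cast h_int
    have h_mul : (d * r : ℝ) * (σ * x i) ≤ d * r * (3 * r) := by gcongr
    rw [h_norm]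
    push_cast at h_sq
    linarith
  · have h_coord : 4 * (r : ℝ) ≤ σ * z i := mod_cast hσz
    have h_mul : (d * r : ℝ) * (4 * r) ≤ d * r * (σ * z i) := by gcongr
    have h_gap : ((25 * d ^ 2 + 39 * d) * r ^ 2 + 256 : ℝ) ≤ d * r ^ 2 * (400 * d) := by
      have : (1 : ℝ) ≤ d * r ^ 2 := by nlinarith
      have : (d * r ^ 2 : ℝ) ≤ d * (d * r ^ 2) := by nlinarith
      nlinarith
    have h_gap' := (div_le_iff₀ (by positivity)).mpr h_gap
    rw [h_norm, one_add_mul, one_div_mul_eq_div]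
    linarith [sqNorm_nonneg z]

lemma one_sub_ofReal_rpow_le_escProb (hd : 3 ≤ d) {r : ℕ} (hr : 1 ≤ r)
    (hK : ∀ x ∈ K, supNorm x ≤ 3 * r) {z : Zd d} (hz : 4 * r ≤ supNorm z) :
    1 - ENNReal.ofReal ((1 + 1 / (400 * d)) ^ (-(1 / 4) : ℝ)) ≤ escProb K z := by
  obtain ⟨q, ρ, hρ, h_near, h_far⟩ := exists_sqNorm_add_separated hr hz
  have hρ_rpow : 0 < ρ ^ (-(1 / 4) : ℝ) := Real.rpow_pos_of_pos hρ _
  set f : Zd d → ℝ := fun x => potential (x + q) / ρ ^ (-(1 / 4) : ℝ) with hf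
  have h_superharmonic : transition (fun x => ENNReal.ofReal (f x)) ≤ fun x => .ofReal (f x) := by
    refine fun x => transition_ofReal_le (by lia)
      (fun y => div_nonneg (potential_nonneg _) hρ_rpow.le) ?_
    simp only [← Finset.sum_div, ← mul_div_assoc, add_right_comm x]
    gcongr
    exact sum_potential_add_stepVec_le hd (x + q)
  have h_on_K : ∀ x ∈ K, 1 ≤ ENNReal.ofReal (f x) := fun x hx => by
    rw [ENNReal.one_le_ofReal, one_le_div hρ_rpow]
    exact Real.rpow_le_rpow_of_nonpos (by linarith [sqNorm_nonneg (x + q)])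
      (h_near x (hK x hx)) (by norm_num)
  have h_at_z : f z ≤ (1 + 1 / (400 * d)) ^ (-(1 / 4) : ℝ) := by
    rw [hf, div_le_iff₀ hρ_rpow, ← Real.mul_rpow (by positivity) hρ.le]
    exact Real.rpow_le_rpow_of_nonpos (by positivity) h_far (by norm_num)
  calc 1 - ENNReal.ofReal ((1 + 1 / (400 * d)) ^ (-(1 / 4) : ℝ))
      ≤ 1 - ENNReal.ofReal (f z) := tsub_le_tsub_left (ENNReal.ofReal_le_ofReal h_at_z) 1
    _ ≤ escProb K z := one_sub_le_escProb (by lia) h_superharmonic h_on_K z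

end Escape

section Paths

variable {d : ℕ} (W : SRW d) (K : Set (Zd d)) (z : Zd d)

lemma ae_start : ∀ᵐ ω ∂W.P z, ω 0 = z := by
  have := W.isProb z
  exact (mem_ae_iff_prob_eq_one
    (measurable_pi_apply (X := fun _ : ℕ => Zd d) 0 (measurableSet_singleton z))).mpr (W.start z)

lemma ae_isNbr : ∀ᵐ ω ∂W.P z, ∀ t, IsNbr (ω t) (ω (t + 1)) := by
  have := W.isProb z
  refine (mem_ae_iff_prob_eq_one ?_).mpr (W.nn z)
  rw [Set.ofPred_forall]
  refine MeasurableSet.iInter fun t => ?_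
  have h_pair : Measurable fun ω : ℕ → Zd d => (ω t, ω (t + 1)) := by fun_prop
  exact h_pair (MeasurableSet.of_discrete (s := {p : Zd d × Zd d | IsNbr p.1 p.2}))

/-- The set of trajectories that agree with `γ` up to time `n`. -/
def pathCylinder (n : ℕ) (γ : ℕ → Zd d) : Set (ℕ → Zd d) := {ω | ∀ t ≤ n, ω t = γ t}

/-- The event that the first visit to `K` at or after time `n` happens at time `n + m`. -/
def firstHitFrom (n m : ℕ) : Set (ℕ → Zd d) := {ω | (∀ s < m, ω (n + s) ∉ K) ∧ ω (n + m) ∈ K}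

variable {K} in
lemma mem_firstHitFrom_succ {n m : ℕ} {ω : ℕ → Zd d} :
    ω ∈ firstHitFrom K n (m + 1) ↔ ω n ∉ K ∧ ω ∈ firstHitFrom K (n + 1) m := by
  simp only [firstHitFrom, Set.mem_ofPred_eq, Nat.forall_lt_succ_left, add_zero, and_assoc,
    add_assoc, add_comm 1]

lemma measure_pathCylinder_inter_le (n : ℕ) (γ : ℕ → Zd d) (A : Set (ℕ → Zd d)) :
    W.P z (pathCylinder n γ ∩ A) ≤
      ∑ w ∈ nbrs (γ n), W.P z (pathCylinder (n + 1) (Function.update γ (n + 1) w) ∩ A) := by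
  refine (measure_mono_ae ?_).trans (measure_biUnion_finset_le _ _)
  filter_upwards [ae_isNbr W z] with ω h_nbr ⟨h_cyl, hA⟩
  refine Set.mem_iUnion₂.mpr ⟨ω (n + 1), ?_, fun t ht => ?_, hA⟩
  · rw [mem_nbrs_iff_isNbr, ← h_cyl n le_rfl]
    exact h_nbr n
  · rcases ht.lt_or_eq with h | rfl
    · rw [Function.update_of_ne h.ne, h_cyl t (by lia)]
    · rw [Function.update_self]

lemma measure_pathCylinder_inter_firstHitFrom_le (m n : ℕ) {γ : ℕ → Zd d} (h_start : γ 0 = z)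
    (h_nbr : ∀ t < n, IsNbr (γ t) (γ (t + 1))) :
    W.P z (pathCylinder n γ ∩ firstHitFrom K n m) ≤
      ((2 * d : ℕ) : ℝ≥0∞)⁻¹ ^ n * firstHitProb K m (γ n) := by
  induction m generalizing n γ with
  | zero =>
    by_cases hγ : γ n ∈ K
    · simpa [firstHitProb, hγ, pathCylinder] using
        (measure_mono Set.inter_subset_left).trans (W.cyl z n γ h_start h_nbr).le
    · have h_empty : pathCylinder n γ ∩ firstHitFrom K n 0 = ∅ :=
        Set.eq_empty_of_forall_notMem fun ω ⟨h_cyl, _, h_hit⟩ => hγ (h_cyl n le_rfl ▸ h_hit)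
      simp [h_empty]
  | succ m ih =>
    by_cases hγ : γ n ∈ K
    · have h_empty : pathCylinder n γ ∩ firstHitFrom K n (m + 1) = ∅ :=
        Set.eq_empty_of_forall_notMem fun ω ⟨h_cyl, h_hit⟩ =>
          (mem_firstHitFrom_succ.mp h_hit).1 (h_cyl n le_rfl ▸ hγ)
      simp [h_empty]
    have h_extend : ∀ w ∈ nbrs (γ n),
        W.P z (pathCylinder (n + 1) (Function.update γ (n + 1) w) ∩ firstHitFrom K (n + 1) m) ≤
          ((2 * d : ℕ) : ℝ≥0∞)⁻¹ ^ (n + 1) * firstHitProb K m w := fun w hw => by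
      have h_step := ih (n + 1) (γ := Function.update γ (n + 1) w) (by simp [h_start])
        fun t ht => by
          rw [Function.update_of_ne ht.ne]
          rcases (Nat.lt_succ_iff.mp ht).lt_or_eq with h | rfl
          · rw [Function.update_of_ne (by lia)]
            exact h_nbr t h
          · rw [Function.update_self]
            exact mem_nbrs_iff_isNbr.mp hw
      rwa [Function.update_self] at h_step
    calc W.P z (pathCylinder n γ ∩ firstHitFrom K n (m + 1))
        ≤ W.P z (pathCylinder n γ ∩ firstHitFrom K (n + 1) m) :=
          measure_mono <| Set.inter_subset_inter_right _ fun ω h => (mem_firstHitFrom_succ.mp h).2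
      _ ≤ ∑ w ∈ nbrs (γ n), ((2 * d : ℕ) : ℝ≥0∞)⁻¹ ^ (n + 1) * firstHitProb K m w :=
          (measure_pathCylinder_inter_le W z n γ _).trans (Finset.sum_le_sum h_extend)
      _ = ((2 * d : ℕ) : ℝ≥0∞)⁻¹ ^ n * firstHitProb K (m + 1) (γ n) := by
          rw [firstHitProb, Set.indicator_of_mem hγ, transition, ← Finset.mul_sum, pow_succ,
            mul_assoc]

lemma measure_hitBy_le_sum_firstHitProb (ℓ : ℕ) :
    W.P z (HitBy K ℓ) ≤ ∑ m ∈ Finset.range (ℓ + 1), firstHitProb K m z := by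
  classical
  have h_first : ∀ m, W.P z (pathCylinder 0 (fun _ => z) ∩ firstHitFrom K 0 m) ≤
      firstHitProb K m z := fun m => by
    simpa using measure_pathCylinder_inter_firstHitFrom_le W K z m 0 (γ := fun _ => z) rfl (by simp)
  refine le_trans ?_ ((measure_biUnion_finset_le _ _).trans
    (Finset.sum_le_sum fun m _ => h_first m))
  refine measure_mono_ae ?_
  filter_upwards [ae_start W z] with ω h_start ⟨t, ht, htK⟩
  have h_hits : ∃ t, ω t ∈ K := ⟨t, htK⟩
  refine Set.mem_iUnion₂.mpr ⟨Nat.find h_hits, ?_, ?_, fun s hs => ?_, ?_⟩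
  · exact Finset.mem_range_succ_iff.mpr ((Nat.find_min' h_hits htK).trans ht)
  · rintro s hs
    rw [Nat.le_zero.mp hs, h_start]
  · rw [zero_add]
    exact Nat.find_min h_hits hs
  · rw [zero_add]
    exact Nat.find_spec h_hits

end Paths

section Main

variable {d : ℕ} {K : Finset (Zd d)}

lemma tsum_mul_firstHitProb_le_cap {φ : Zd d → ℝ≥0∞} (h : φ ≤ escProb K) (m : ℕ) :
    ∑' z, φ z * firstHitProb (K : Set (Zd d)) m z ≤ cap K := by
  rw [tsum_mul_firstHitProb, tsum_eq_sum (s := K) fun x hx => by simp [hx], cap]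
  exact Finset.sum_le_sum fun x hx => by simpa [hx] using iterate_avoidStep_le_escProb h m x

lemma mul_tsum_measure_hitBy_le (W : SRW d) {S : Set (Zd d)} (hS : ∀ z ∈ S, z ∉ K) {c : ℝ≥0∞}
    (hc : ∀ z ∈ S, c ≤ escProb K z) (ℓ : ℕ) :
    c * ∑' z : S, W.P z (HitBy (K : Set (Zd d)) ℓ) ≤ ℓ * cap K := by
  set φ : Zd d → ℝ≥0∞ := S.indicator fun _ => c
  have hφ : φ ≤ escProb K := Set.indicator_le hc
  have h_zero : ∑' z, φ z * firstHitProb (K : Set (Zd d)) 0 z = 0 :=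
    ENNReal.tsum_eq_zero.mpr fun z => by
      by_cases hz : z ∈ S <;> simp [φ, firstHitProb, hz, hS]
  calc c * ∑' z : S, W.P z (HitBy (K : Set (Zd d)) ℓ)
      = ∑' z, φ z * W.P z (HitBy (K : Set (Zd d)) ℓ) := by
        rw [← ENNReal.tsum_mul_left, tsum_subtype S fun z => c * W.P z (HitBy K ℓ)]
        exact tsum_congr fun z => by by_cases hz : z ∈ S <;> simp [φ, hz]
    _ ≤ ∑' z, ∑ m ∈ Finset.range (ℓ + 1), φ z * firstHitProb (K : Set (Zd d)) m z := by
        simp only [← Finset.mul_sum]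
        gcongr
        exact measure_hitBy_le_sum_firstHitProb W _ _ ℓ
    _ = ∑ m ∈ Finset.range (ℓ + 1), ∑' z, φ z * firstHitProb (K : Set (Zd d)) m z :=
        Summable.tsum_finsetSum fun _ _ => ENNReal.summable
    _ = ∑ m ∈ Finset.range ℓ, ∑' z, φ z * firstHitProb (K : Set (Zd d)) (m + 1) z := by
        rw [Finset.sum_range_succ', h_zero, add_zero]
    _ ≤ ℓ * cap K := by
        simpa using Finset.sum_le_card_nsmul (Finset.range ℓ) _ _ fun m _ =>
          tsum_mul_firstHitProb_le_cap hφ (m + 1)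

end Main

theorem sum_hitting_upper_bound_general {d : ℕ} (hd : 3 ≤ d) :
    ∃ C : ℝ≥0∞, C ≠ ⊤ ∧ ∀ (W : SRW d) (r ℓ : ℕ) (K : Finset (Zd d)),
      1 ≤ r → (∀ x ∈ K, supNorm x ≤ 3 * r) →
      ∑' z : {z : Zd d // 4 * r ≤ supNorm z}, W.P z.1 (HitBy (K : Set (Zd d)) ℓ)
        ≤ C * ℓ * cap K := by
  set c : ℝ≥0∞ := 1 - ENNReal.ofReal ((1 + 1 / (400 * d)) ^ (-(1 / 4) : ℝ)) with hc
  have hc_pos : c ≠ 0 := by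
    have hd_real : (0 : ℝ) < d := by exact_mod_cast (by lia : 0 < d)
    rw [hc, ne_eq, tsub_eq_zero_iff_le, not_le, ENNReal.ofReal_lt_one]
    exact Real.rpow_lt_one_of_one_lt_of_neg (by simpa using hd_real) (by norm_num)
  have hc_top : c ≠ ⊤ := ENNReal.sub_ne_top ENNReal.one_ne_top
  refine ⟨c⁻¹, ENNReal.inv_ne_top.mpr hc_pos, fun W r ℓ K hr hK => ?_⟩
  have h_disjoint : ∀ z ∈ {z : Zd d | 4 * r ≤ supNorm z}, z ∉ K := fun z hz hzK => by
    have := hK z hzK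
    have : 4 * r ≤ supNorm z := hz
    lia
  rw [mul_assoc, ← ENNReal.mul_le_iff_le_inv hc_pos hc_top]
  exact mul_tsum_measure_hitBy_le W h_disjoint
    (fun z hz => one_sub_ofReal_rpow_le_escProb hd hr hK hz) ℓ

theorem sum_hitting_upper_bound {d : ℕ} (hd : 3 ≤ d) :
    ∃ C : ℝ≥0∞, C ≠ ⊤ ∧ ∀ (W : SRW d) (r ℓ : ℕ) (K : Finset (Zd d)),
      1 ≤ r → 16 * r ^ 2 ≤ ℓ → (∀ x ∈ K, supNorm x ≤ 3 * r) →
      ∑' z : {z : Zd d // 4 * r ≤ supNorm z}, W.P z.1 (HitBy (K : Set (Zd d)) ℓ)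
        ≤ C * ℓ * cap K := by
  obtain ⟨C, hC, h_bound⟩ := sum_hitting_upper_bound_general hd
  exact ⟨C, hC, fun W r ℓ K hr _ hK => h_bound W r ℓ K hr hK⟩

end
end

section
/- Let ε > 0, δ ∈ (0, ε), and m(ℓ) = c·ln(ln ℓ)^ε/(ℓ³·ln ℓ)·1[ℓ ≥ ℓ₀] with ℓ₀ ≥ e^e chosen such that x ↦ x²·m(x) is decreasing on [ℓ₀*, ∞) for some ℓ₀* ≥ ℓ₀. Define R_n = exp(exp(n^{1/(1+δ)})). Then for any constants D_low, D_up, α, v > 0, one has Σ_{ℓ = D_low·R_n²}^{D_up·R_{n+1}²} ℓ²·m(ℓ) → ∞ as n → ∞; in particular the sum exceeds α/v for all sufficiently large n. -/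
open MeasureTheory ENNReal Filter

noncomputable section

/-!
The summand `ℓ² m(ℓ)` is `c (log log ℓ)^ε / (ℓ log ℓ)`. Write `s_n = n^a` with `a = 1 / (1 + δ)`.
Throughout the `n`-th block `log log ℓ` is comparable to `s_n`, so `(log log ℓ)^ε` can be pulled out
of the sum at the cost of a constant, whatever the sign of `ε`. What remains, `∑ 1 / (ℓ log ℓ)`,
dominates the increment of the concave function `log log` over the block. At both ends
`log log (D R²) = s + log 2 + O(exp (-s))` for `R = exp (exp s)`: squaring `R` contributes the same
`log 2` twice, which cancels, and the constants are lost in the error term. The increment is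
therefore asymptotic to `s_{n+1} - s_n`, that is to `a n^(a-1)`, and the block sum is at least of
order `n^(a ε) n^(a-1) = n^((ε - δ) / (1 + δ))`.
-/

section

open Asymptotics
open scoped Topology

lemma log_sub_log_le {x y : ℝ} (hx : 0 < x) (hy : 0 < y) :
    Real.log y - Real.log x ≤ (y - x) / x := by
  rw [← Real.log_div hy.ne' hx.ne', sub_div, div_self hx.ne']
  exact Real.log_le_sub_one_of_pos (div_pos hy hx)

lemma log_log_sub_log_log_le {x y : ℝ} (hx : 1 < x) (hy : 1 < y) :
    Real.log (Real.log y) - Real.log (Real.log x) ≤ (y - x) / (x * Real.log x) := by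
  have hlogx : 0 < Real.log x := Real.log_pos hx
  calc Real.log (Real.log y) - Real.log (Real.log x)
      ≤ (Real.log y - Real.log x) / Real.log x := log_sub_log_le hlogx (Real.log_pos hy)
    _ ≤ (y - x) / x / Real.log x := by gcongr; exact log_sub_log_le (by linarith) (by linarith)
    _ = (y - x) / (x * Real.log x) := div_div _ _ _

lemma log_log_sub_log_log_le_sum_Ico {a b : ℕ} (ha : 2 ≤ a) (hab : a ≤ b) :
    Real.log (Real.log b) - Real.log (Real.log a) ≤
      ∑ ℓ ∈ Finset.Ico a b, 1 / ((ℓ : ℝ) * Real.log ℓ) := by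
  rw [← Finset.sum_Ico_sub (fun ℓ : ℕ ↦ Real.log (Real.log ℓ)) hab]
  refine Finset.sum_le_sum fun ℓ hℓ ↦ ?_
  have hℓ1 : (1 : ℝ) < ℓ := by exact_mod_cast ha.trans (Finset.mem_Ico.mp hℓ).1
  simpa using log_log_sub_log_log_le hℓ1 (y := ((ℓ + 1 : ℕ) : ℝ)) (by push_cast; linarith)

lemma log_log_le_log_log {x y : ℝ} (hx : 1 < x) (hxy : x ≤ y) :
    Real.log (Real.log x) ≤ Real.log (Real.log y) :=
  Real.log_le_log (Real.log_pos hx) (Real.log_le_log (by linarith) hxy)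

lemma log_log_sub_log_log_le_sum_Icc_ceil_floor {A B : ℝ} (hA : 1 < A) (hB : 1 < B) :
    Real.log (Real.log B) - Real.log (Real.log ⌈A⌉₊) ≤
      ∑ ℓ ∈ Finset.Icc ⌈A⌉₊ ⌊B⌋₊, 1 / ((ℓ : ℝ) * Real.log ℓ) := by
  have hB' : B ≤ (⌊B⌋₊ + 1 : ℕ) := by exact_mod_cast (Nat.lt_floor_add_one B).le
  rw [← Finset.Ico_add_one_right_eq_Icc]
  rcases le_total ⌈A⌉₊ (⌊B⌋₊ + 1) with hab | hba
  · have h2 : 2 ≤ ⌈A⌉₊ := Nat.lt_ceil.mpr (by exact_mod_cast hA)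
    exact (sub_le_sub_right (log_log_le_log_log hB hB') _).trans
      (log_log_sub_log_log_le_sum_Ico h2 hab)
  · rw [Finset.Ico_eq_empty_of_le hba, Finset.sum_empty, sub_nonpos]
    exact log_log_le_log_log hB (hB'.trans (by exact_mod_cast hba))

lemma min_one_rpow_mul_rpow_le {s u C : ℝ} (r : ℝ) (hs : 0 < s) (hC : 0 < C) (hsu : s ≤ u)
    (huC : u ≤ C * s) : min 1 (C ^ r) * s ^ r ≤ u ^ r := by
  rcases le_total 0 r with hr | hr
  · calc min 1 (C ^ r) * s ^ r ≤ 1 * s ^ r := by gcongr; exact min_le_left _ _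
      _ = s ^ r := one_mul _
      _ ≤ u ^ r := by gcongr
  · calc min 1 (C ^ r) * s ^ r ≤ C ^ r * s ^ r := by gcongr; exact min_le_right _ _
      _ = (C * s) ^ r := (Real.mul_rpow hC.le hs.le).symm
      _ ≤ u ^ r := Real.rpow_le_rpow_of_nonpos (hs.trans_le hsu) huC hr

lemma min_one_rpow_mul_log_log_sub_le_sum {s C A B : ℝ} (r : ℝ) (hs : 0 < s) (hC : 0 < C)
    (hA : Real.exp (Real.exp s) ≤ A) (hB : 1 < B) (hBC : Real.log (Real.log B) ≤ C * s) :
    min 1 (C ^ r) * s ^ r * (Real.log (Real.log B) - Real.log (Real.log ⌈A⌉₊)) ≤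
      ∑ ℓ ∈ Finset.Icc ⌈A⌉₊ ⌊B⌋₊, Real.log (Real.log ℓ) ^ r / (ℓ * Real.log ℓ) := by
  have hA1 : 1 < A := (Real.one_lt_exp_iff.mpr (Real.exp_pos s)).trans_le hA
  calc min 1 (C ^ r) * s ^ r * (Real.log (Real.log B) - Real.log (Real.log ⌈A⌉₊))
      ≤ min 1 (C ^ r) * s ^ r * ∑ ℓ ∈ Finset.Icc ⌈A⌉₊ ⌊B⌋₊, 1 / ((ℓ : ℝ) * Real.log ℓ) := by
        gcongr
        exact log_log_sub_log_log_le_sum_Icc_ceil_floor hA1 hB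
    _ ≤ ∑ ℓ ∈ Finset.Icc ⌈A⌉₊ ⌊B⌋₊, Real.log (Real.log ℓ) ^ r / (ℓ * Real.log ℓ) := by
        rw [Finset.mul_sum]
        refine Finset.sum_le_sum fun ℓ hℓ ↦ ?_
        have hAℓ : A ≤ ℓ := Nat.ceil_le.mp (Finset.mem_Icc.mp hℓ).1
        have hℓB : ℓ ≤ B := (Nat.le_floor_iff (by linarith)).mp (Finset.mem_Icc.mp hℓ).2
        have hℓ1 : (1 : ℝ) < ℓ := hA1.trans_le hAℓ
        have hlog : 0 < Real.log ℓ := Real.log_pos hℓ1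
        have hlower : s ≤ Real.log (Real.log ℓ) := by
          rw [Real.le_log_iff_exp_le hlog, Real.le_log_iff_exp_le (by linarith)]
          exact hA.trans hAℓ
        have hupper : Real.log (Real.log ℓ) ≤ C * s := (log_log_le_log_log hℓ1 hℓB).trans hBC
        rw [mul_one_div]
        gcongr
        exact min_one_rpow_mul_rpow_le r hs hC hlower hupper

lemma isBigO_log_mul_exp_add_const_sub {C : ℝ} (hC : 0 < C) (K : ℝ) :
    (fun t ↦ Real.log (C * Real.exp t + K) - (t + Real.log C)) =O[atTop]
      fun t ↦ Real.exp (-t) := by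
  have hexp : Tendsto (fun t : ℝ ↦ 1 + K / C * Real.exp (-t)) atTop (𝓝 1) := by
    simpa using (Real.tendsto_exp_neg_atTop_nhds_zero.const_mul (K / C)).const_add 1
  have hlog : (fun t ↦ Real.log (1 + K / C * Real.exp (-t))) =O[atTop] fun t ↦ Real.exp (-t) := by
    have h := (Real.hasDerivAt_log one_ne_zero).isBigO_sub.comp_tendsto hexp
    simp only [Function.comp_def, Real.log_one, sub_zero, add_sub_cancel_left] at h
    exact h.trans (isBigO_const_mul_self _ _ _)
  refine hlog.congr' ?_ EventuallyEq.rfl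
  filter_upwards [hexp.eventually (lt_mem_nhds one_pos)] with t ht
  have hfactor : C * Real.exp t + K = C * Real.exp t * (1 + K / C * Real.exp (-t)) := by
    rw [Real.exp_neg]
    field_simp
  rw [hfactor, Real.log_mul (by positivity) ht.ne', Real.log_mul hC.ne' (Real.exp_ne_zero t),
    Real.log_exp]
  ring

lemma isEquivalent_rpow_add_one_sub_rpow (a : ℝ) :
    (fun x : ℝ ↦ (x + 1) ^ a - x ^ a) ~[atTop] fun x ↦ a * x ^ (a - 1) := by
  rcases eq_or_ne a 0 with rfl | ha
  · simp [IsEquivalent.refl]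
  have hderiv : HasDerivAt (fun y : ℝ ↦ y ^ a) a 1 := by
    simpa using Real.hasDerivAt_rpow_const (p := a) (Or.inl one_ne_zero)
  have hquot : (fun x : ℝ ↦ x * ((1 + x⁻¹) ^ a - 1)) ~[atTop] fun _ ↦ a :=
    (isEquivalent_const_iff_tendsto ha).mpr <| by simpa using hderiv.hasFDerivAt.lim_real 1
  refine (hquot.mul IsEquivalent.refl).congr_left ?_
  filter_upwards [eventually_gt_atTop 0] with x hx
  have hfactor : x + 1 = x * (1 + x⁻¹) := by field_simp
  have hone_add : 0 ≤ 1 + x⁻¹ := by positivity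
  simp only [Pi.mul_apply]
  rw [hfactor, Real.mul_rpow hx.le hone_add, Real.rpow_sub_one hx.ne']
  field_simp

lemma isLittleO_exp_neg_rpow_rpow {a : ℝ} (ha : 0 < a) (b : ℝ) :
    (fun x : ℝ ↦ Real.exp (-x ^ a)) =o[atTop] fun x ↦ x ^ b := by
  have h := (isLittleO_exp_neg_mul_rpow_atTop one_pos (b / a)).comp_tendsto (tendsto_rpow_atTop ha)
  refine h.congr' (by simp [Function.comp_def]) ?_
  filter_upwards [eventually_ge_atTop 0] with x hx
  rw [Function.comp_apply, ← Real.rpow_mul hx, mul_div_cancel₀ _ ha.ne']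

lemma isBigO_add_one_rpow (b : ℝ) : (fun x : ℝ ↦ (x + 1) ^ b) =O[atTop] fun x ↦ x ^ b := by
  have hequiv : (fun x : ℝ ↦ x + 1) ~[atTop] fun x ↦ x :=
    IsEquivalent.refl.add_isLittleO (isLittleO_const_id_atTop 1)
  have hnonneg : ∀ᶠ x : ℝ in atTop, 0 ≤ x + 1 :=
    (eventually_ge_atTop (-1)).mono fun x hx ↦ by linarith
  exact (hequiv.isTheta.rpow hnonneg (eventually_ge_atTop 0)).isBigO

/-- The endpoint `D R²`, at the double-exponential scale `R = exp (exp t)`, of a block of lengths.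
The scale is parametrized by `t = log log R`, so the paper's `R_n` is at `t = n ^ (1 / (1 + δ))`. -/
def sqScale (D t : ℝ) : ℝ := D * Real.exp (Real.exp t) ^ 2

lemma log_sqScale {D : ℝ} (hD : 0 < D) (t : ℝ) :
    Real.log (sqScale D t) = 2 * Real.exp t + Real.log D := by
  rw [sqScale, Real.log_mul hD.ne' (by positivity), Real.log_pow, Real.log_exp]
  push_cast
  ring

lemma tendsto_sqScale_atTop {D : ℝ} (hD : 0 < D) : Tendsto (sqScale D) atTop atTop :=
  ((tendsto_pow_atTop two_ne_zero).comp <|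
    Real.tendsto_exp_atTop.comp Real.tendsto_exp_atTop).const_mul_atTop hD

lemma eventually_exp_exp_le_sqScale {D : ℝ} (hD : 0 < D) :
    ∀ᶠ t in atTop, Real.exp (Real.exp t) ≤ sqScale D t := by
  filter_upwards [((Real.tendsto_exp_atTop.comp Real.tendsto_exp_atTop).const_mul_atTop
    hD).eventually_ge_atTop 1] with t ht
  calc Real.exp (Real.exp t) = 1 * Real.exp (Real.exp t) := (one_mul _).symm
    _ ≤ D * Real.exp (Real.exp t) * Real.exp (Real.exp t) := by gcongr; exact ht
    _ = sqScale D t := by rw [sqScale]; ring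

lemma ceil_sqScale_le {D : ℝ} (hD : 0 ≤ D) (t : ℝ) : ⌈sqScale D t⌉₊ ≤ sqScale (D + 1) t := by
  have hsq : 1 ≤ Real.exp (Real.exp t) ^ 2 :=
    one_le_pow₀ (Real.one_le_exp (Real.exp_pos t).le)
  calc (⌈sqScale D t⌉₊ : ℝ) ≤ sqScale D t + 1 :=
        (Nat.ceil_lt_add_one (mul_nonneg hD (by positivity))).le
    _ ≤ sqScale (D + 1) t := by rw [sqScale, sqScale, add_mul, one_mul]; gcongr

lemma isBigO_log_log_sqScale_sub_add_log_two {D : ℝ} (hD : 0 < D) :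
    (fun t ↦ Real.log (Real.log (sqScale D t)) - (t + Real.log 2)) =O[atTop]
      fun t ↦ Real.exp (-t) := by
  simpa only [log_sqScale hD] using isBigO_log_mul_exp_add_const_sub two_pos (Real.log D)

lemma isLittleO_log_log_sqScale_rpow_sub_add_log_two {a D : ℝ} (ha : 0 < a) (hD : 0 < D) (b : ℝ) :
    (fun x : ℝ ↦ Real.log (Real.log (sqScale D (x ^ a))) - (x ^ a + Real.log 2)) =o[atTop]
      fun x ↦ x ^ b :=
  ((isBigO_log_log_sqScale_sub_add_log_two hD).comp_tendsto (tendsto_rpow_atTop ha)).trans_isLittleO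
    (isLittleO_exp_neg_rpow_rpow ha b)

lemma isBigO_log_log_sqScale_rpow {a D : ℝ} (ha : 0 < a) (hD : 0 < D) :
    (fun x : ℝ ↦ Real.log (Real.log (sqScale D (x ^ a)))) =O[atTop] fun x ↦ x ^ a := by
  have hconst : (fun _ : ℝ ↦ Real.log 2) =o[atTop] fun x : ℝ ↦ x ^ a :=
    isLittleO_const_left.mpr <| .inr <| tendsto_norm_atTop_atTop.comp (tendsto_rpow_atTop ha)
  simpa using (isLittleO_log_log_sqScale_rpow_sub_add_log_two ha hD a).isBigO.add
    ((isBigO_refl _ _).add hconst.isBigO)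

lemma isEquivalent_log_log_sqScale_sub {a D E : ℝ} (ha : 0 < a) (hD : 0 < D) (hE : 0 < E) :
    (fun x : ℝ ↦ Real.log (Real.log (sqScale E ((x + 1) ^ a))) -
      Real.log (Real.log (sqScale D (x ^ a)))) ~[atTop] fun x ↦ a * x ^ (a - 1) := by
  have hlow := isLittleO_log_log_sqScale_rpow_sub_add_log_two ha hD (a - 1)
  have hshift : Tendsto (fun x : ℝ ↦ x + 1) atTop atTop :=
    tendsto_atTop_add_const_right atTop 1 tendsto_id
  have hup := ((isLittleO_log_log_sqScale_rpow_sub_add_log_two ha hE (a - 1)).comp_tendsto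
    hshift).trans_isBigO (isBigO_add_one_rpow (a - 1))
  have herr := (hup.sub hlow).trans_isBigO (isBigO_self_const_mul ha.ne' _ _)
  refine ((isEquivalent_rpow_add_one_sub_rpow a).add_isLittleO herr).congr_left
    (Eventually.of_forall fun x ↦ ?_)
  simp only [Pi.add_apply, Function.comp_apply]
  ring

lemma tendsto_rpow_mul_log_log_sqScale_sub {a r D E : ℝ} (ha : 0 < a) (har : 1 < a * (1 + r))
    (hD : 0 < D) (hE : 0 < E) :
    Tendsto (fun x : ℝ ↦ (x ^ a) ^ r * (Real.log (Real.log (sqScale E ((x + 1) ^ a))) -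
      Real.log (Real.log (sqScale D (x ^ a))))) atTop atTop := by
  have hpow : Tendsto (fun x : ℝ ↦ a * x ^ (a * (1 + r) - 1)) atTop atTop :=
    (tendsto_rpow_atTop (sub_pos.mpr har)).const_mul_atTop ha
  refine (IsEquivalent.refl.mul (isEquivalent_log_log_sqScale_sub ha hD hE)).symm.tendsto_atTop ?_
  refine hpow.congr' ?_
  filter_upwards [eventually_gt_atTop 0] with x hx
  have hexp : a * (1 + r) - 1 = a * r + (a - 1) := by ring
  rw [Pi.mul_apply, hexp, Real.rpow_add hx, Real.rpow_mul hx.le]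
  ring

lemma tendsto_sum_log_log_rpow_div {a r D E : ℝ} (ha : 0 < a) (har : 1 < a * (1 + r))
    (hD : 0 < D) (hE : 0 < E) :
    Tendsto (fun x : ℝ ↦ ∑ ℓ ∈ Finset.Icc ⌈sqScale D (x ^ a)⌉₊ ⌊sqScale E ((x + 1) ^ a)⌋₊,
      Real.log (Real.log ℓ) ^ r / (ℓ * Real.log ℓ)) atTop atTop := by
  have hs : Tendsto (fun x : ℝ ↦ x ^ a) atTop atTop := tendsto_rpow_atTop ha
  have hshift : Tendsto (fun x : ℝ ↦ x + 1) atTop atTop :=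
    tendsto_atTop_add_const_right atTop 1 tendsto_id
  obtain ⟨C, hC, hupper⟩ := (((isBigO_log_log_sqScale_rpow ha hE).comp_tendsto hshift).trans
    (isBigO_add_one_rpow a)).exists_pos
  have hmin : 0 < min 1 (C ^ r) := lt_min one_pos (Real.rpow_pos_of_pos hC r)
  refine tendsto_atTop_mono' _ ?_ ((tendsto_rpow_mul_log_log_sqScale_sub ha har
    (add_pos hD one_pos) hE).const_mul_atTop hmin)
  filter_upwards [hs.eventually_gt_atTop 0, hs.eventually (eventually_exp_exp_le_sqScale hD),
    ((tendsto_sqScale_atTop hE).comp (hs.comp hshift)).eventually_gt_atTop 1, hupper.bound]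
    with x hx hA hB hx_upper
  have hBC : Real.log (Real.log (sqScale E ((x + 1) ^ a))) ≤ C * x ^ a := by
    simpa [abs_of_pos hx] using (le_abs_self _).trans hx_upper
  have hceil : (1 : ℝ) < ⌈sqScale D (x ^ a)⌉₊ :=
    (Real.one_lt_exp_iff.mpr (Real.exp_pos _)).trans_le (hA.trans (Nat.le_ceil _))
  refine le_trans ?_ (min_one_rpow_mul_log_log_sub_le_sum r hx hC hA hB hBC)
  rw [← mul_assoc]
  exact mul_le_mul_of_nonneg_left
    (sub_le_sub_left (log_log_le_log_log hceil (ceil_sqScale_le hD.le _)) _) (by positivity)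

theorem good_scales_from_loglog_tail_general (ε δ c : ℝ) (hδ : -1 < δ) (hδε : δ < ε)
    (hc : 0 < c) (m : ℕ → ℝ)
    (hm : ∀ᶠ ℓ : ℕ in atTop,
      m ℓ = c * Real.log (Real.log ℓ) ^ ε / ((ℓ : ℝ) ^ 3 * Real.log ℓ))
    (R : ℕ → ℝ) (hR : ∀ n, R n = Real.exp (Real.exp ((n : ℝ) ^ (1 / (1 + δ)))))
    (Dlow Dup : ℝ) (hDlow : 0 < Dlow) (hDup : 0 < Dup) :
    Tendsto (fun n ↦ ∑ ℓ ∈ Finset.Icc ⌈Dlow * (R n) ^ 2⌉₊ ⌊Dup * (R (n + 1)) ^ 2⌋₊,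
      (ℓ : ℝ) ^ 2 * m ℓ) atTop atTop := by
  have hδ' : 0 < 1 + δ := by linarith
  have ha : 0 < 1 / (1 + δ) := one_div_pos.mpr hδ'
  have haε : 1 < 1 / (1 + δ) * (1 + ε) := by
    rw [one_div_mul_eq_div, one_lt_div hδ']
    linarith
  have hlow : Tendsto (fun n : ℕ ↦ sqScale Dlow ((n : ℝ) ^ (1 / (1 + δ)))) atTop atTop :=
    (tendsto_sqScale_atTop hDlow).comp ((tendsto_rpow_atTop ha).comp tendsto_natCast_atTop_atTop)
  have hsum := ((tendsto_sum_log_log_rpow_div ha haε hDlow hDup).comp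
    tendsto_natCast_atTop_atTop).const_mul_atTop hc
  refine hsum.congr' ?_
  filter_upwards [(tendsto_nat_ceil_atTop.comp hlow).eventually
    (eventually_forall_ge_atTop.mpr hm)] with n hn
  simp only [Function.comp_apply, Finset.mul_sum, hR, Nat.cast_add_one]
  refine Finset.sum_congr rfl fun ℓ hℓ ↦ ?_
  rw [hn ℓ (Finset.mem_Icc.mp hℓ).1]
  field_simp

end

theorem good_scales_from_loglog_tail (ε δ c : ℝ) (hε : 0 < ε) (hδ : 0 < δ) (hδε : δ < ε)
    (hc : 0 < c) (ℓ₀ : ℕ) (hℓ₀ : Real.exp (Real.exp 1) ≤ ℓ₀)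
    (m : ℕ → ℝ)
    (hm : ∀ ℓ : ℕ, m ℓ =
      if ℓ₀ ≤ ℓ then c * (Real.log (Real.log ℓ)) ^ ε / ((ℓ : ℝ) ^ 3 * Real.log ℓ) else 0)
    (ℓ₀s : ℝ) (hℓ₀s : (ℓ₀ : ℝ) ≤ ℓ₀s)
    (hmono : ∀ x y : ℝ, ℓ₀s ≤ x → x ≤ y →
      y ^ 2 * (c * (Real.log (Real.log y)) ^ ε / (y ^ 3 * Real.log y)) ≤
        x ^ 2 * (c * (Real.log (Real.log x)) ^ ε / (x ^ 3 * Real.log x)))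
    (R : ℕ → ℝ) (hR : ∀ n, R n = Real.exp (Real.exp ((n : ℝ) ^ (1 / (1 + δ)))))
    (Dlow Dup α v : ℝ) (hDlow : 0 < Dlow) (hDup : 0 < Dup) (hα : 0 < α) (hv : 0 < v) :
    Tendsto (fun n => ∑ ℓ ∈ Finset.Icc ⌈Dlow * (R n) ^ 2⌉₊ ⌊Dup * (R (n + 1)) ^ 2⌋₊,
        (ℓ : ℝ) ^ 2 * m ℓ) atTop atTop ∧
    ∀ᶠ n in atTop, α / v ≤
      ∑ ℓ ∈ Finset.Icc ⌈Dlow * (R n) ^ 2⌉₊ ⌊Dup * (R (n + 1)) ^ 2⌋₊, (ℓ : ℝ) ^ 2 * m ℓ := by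
  have htendsto := good_scales_from_loglog_tail_general ε δ c (by linarith) hδε hc m
    ((eventually_ge_atTop ℓ₀).mono fun ℓ hℓ ↦ (hm ℓ).trans (if_pos hℓ)) R hR Dlow Dup hDlow hDup
  exact ⟨htendsto, htendsto.eventually_ge_atTop _⟩

end
end
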